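/- arXiv:2408.05871 — 2 statements merged into one kernel-verified Lean document; each statement's English description precedes it below -/
import Mathlib

section
/- There exists a function m : ℕ → ℕ such that every convexity space (X, C) with Radon number r(X, C) ≤ r has colorful Helly number h_c(X, C) ≤ m(r). -/
open scoped Classical

universe u

section SetSystems

variable {X : Type*}

/-- A finite family of sets is intersecting if all of its members have a common element. -/
def IsIntersecting (F : Finset (Set X)) : Prop :=
  ∃ x, ∀ K ∈ F, x ∈ K

/-- A convexity space: `∅` and the whole space are convex, convexity is closed under
arbitrary (nonempty) intersections and under unions of (nonempty) chains. -/
def IsConvexitySpace (C : Set (Set X)) : Prop :=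
  ∅ ∈ C ∧ Set.univ ∈ C ∧
    (∀ D ⊆ C, D.Nonempty → ⋂₀ D ∈ C) ∧
    (∀ D ⊆ C, D.Nonempty → IsChain (· ⊆ ·) D → ⋃₀ D ∈ C)

/-- The convex hull of `Y`: intersection of all convex sets containing `Y`. -/
def convHull (C : Set (Set X)) (Y : Set X) : Set X :=
  ⋂₀ {K | K ∈ C ∧ Y ⊆ K}

/-- `Y` admits a Radon partition: a partition into two disjoint parts whose hulls meet. -/
def HasRadonPartition (C : Set (Set X)) (Y : Finset X) : Prop :=
  ∃ A B : Finset X, (↑A ∪ ↑B : Set X) = ↑Y ∧ Disjoint (↑A : Set X) (↑B : Set X) ∧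
    (convHull C ↑A ∩ convHull C ↑B).Nonempty

/-- The Radon number is at most `n`: every finite subset of size at least `n`
admits a Radon partition. -/
def RadonLE (C : Set (Set X)) (n : ℕ) : Prop :=
  ∀ Y : Finset X, n ≤ Y.card → HasRadonPartition C Y

/-- `Y` admits a Tverberg `k`-partition: a partition into `k` pairwise disjoint parts
whose hulls have a common point. -/
def HasTverbergPartition (C : Set (Set X)) (k : ℕ) (Y : Finset X) : Prop :=
  ∃ P : Fin k → Finset X, (⋃ i, (↑(P i) : Set X)) = ↑Y ∧
    (∀ i j, i ≠ j → Disjoint (↑(P i) : Set X) (↑(P j) : Set X)) ∧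
    (⋂ i, convHull C ↑(P i)).Nonempty

/-- A minimally non-intersecting family: not intersecting, but every proper subfamily
obtained by deleting one member is intersecting. -/
def MinNonIntersecting (F : Finset (Set X)) : Prop :=
  ¬ IsIntersecting F ∧ ∀ K ∈ F, IsIntersecting (F.erase K)

/-- The Helly number of the set system `S` is at most `n`. -/
def HellyLE (S : Set (Set X)) (n : ℕ) : Prop :=
  ∀ F : Finset (Set X), ↑F ⊆ S → MinNonIntersecting F → F.card ≤ n

/-- The colorful Helly number of the set system `S` is at most `m`. -/
def ColorfulHellyLE (S : Set (Set X)) (m : ℕ) : Prop :=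
  ∀ F : Fin m → Finset (Set X), (∀ i, ↑(F i) ⊆ S) →
    (∀ K : Fin m → Set X, (∀ i, K i ∈ F i) → (⋂ i, K i).Nonempty) →
    ∃ i, IsIntersecting (F i)

/-- `S` satisfies the fractional Helly property for `k`-tuples with function `β`. -/
def FracHelly (S : Set (Set X)) (k : ℕ) (β : ℝ → ℝ) : Prop :=
  ∀ α ∈ Set.Ioo (0 : ℝ) 1, ∀ F : Finset (Set X), ↑F ⊆ S →
    α * (F.card.choose k : ℝ) ≤
      (((F.powersetCard k).filter (fun G => IsIntersecting G)).card : ℝ) →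
    ∃ G ⊆ F, IsIntersecting G ∧ β α * (F.card : ℝ) ≤ (G.card : ℝ)

/-- The transversal number of the finite family `F` is at most `n`: `F` can be
partitioned into (at most) `n` intersecting subfamilies. -/
def TransversalLE (F : Finset (Set X)) (n : ℕ) : Prop :=
  ∃ P : Fin n → Finset (Set X), (∀ i, P i ⊆ F) ∧ (∀ K ∈ F, ∃! i, K ∈ P i) ∧
    ∀ i, (P i).Nonempty → IsIntersecting (P i)

/-- The fractional transversal number of `F` is at most `t`: there is a finitely supported
fractional transversal of total weight at most `t`. -/
def FracTransversalLE (F : Finset (Set X)) (t : ℝ) : Prop :=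
  ∃ f : X →₀ ℝ, (∀ x, 0 ≤ f x ∧ f x ≤ 1) ∧
    (∀ S ∈ F, 1 ≤ ∑ x ∈ f.support.filter (fun x => x ∈ S), f x) ∧
    (∑ x ∈ f.support, f x) ≤ t

/-- The weak ε-net property: there is a function `g` bounding the transversal number of
every finite subfamily in terms of its fractional transversal number. -/
def WeakEpsNetProp (S : Set (Set X)) : Prop :=
  ∃ g : ℝ → ℕ, ∀ F : Finset (Set X), ↑F ⊆ S → ∀ t : ℝ,
    FracTransversalLE F t → (∀ s : ℝ, FracTransversalLE F s → t ≤ s) →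
    TransversalLE F (g t)

/-- The `(p,q)`-property: among any `p` members (with repetition allowed) some `q`
of them are intersecting. -/
def PQProperty (F : Finset (Set X)) (p q : ℕ) : Prop :=
  ∀ K : Fin p → Set X, (∀ i, K i ∈ F) →
    ∃ s : Finset (Fin p), s.card = q ∧ ∃ x, ∀ i ∈ s, x ∈ K i

/-- A compact set system: every subsystem with empty total intersection contains a
finite subfamily with empty intersection. -/
def CompactSystem (S : Set (Set X)) : Prop :=
  ∀ T ⊆ S, ⋂₀ T = ∅ → ∃ F : Finset (Set X), ↑F ⊆ T ∧ ⋂₀ (↑F : Set (Set X)) = ∅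

/-- The VC-dimension of `S` is at most `d`: every finite set shattered by `S` has
size at most `d`. -/
def VCDimLE (S : Set (Set X)) (d : ℕ) : Prop :=
  ∀ Y : Finset X, (∀ Z ⊆ Y, ∃ K ∈ S, (↑Y : Set X) ∩ K = ↑Z) → Y.card ≤ d

/-- `S^∩`: all intersections of nonempty subcollections of `S`. -/
def interClosure (S : Set (Set X)) : Set (Set X) :=
  {T | ∃ D ⊆ S, D.Nonempty ∧ T = ⋂₀ D}

end SetSystems

section Hypergraphs

variable {V : Type*} [DecidableEq V]

/-- An independent set of the hypergraph with edge set `E`: contains no edge. -/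
def IsIndep (E : Finset (Finset V)) (I : Set V) : Prop :=
  ∀ e ∈ E, ¬ ((↑e : Set V) ⊆ I)

/-- A maximal independent set. -/
def IsMaxIndep (E : Finset (Finset V)) (I : Set V) : Prop :=
  IsIndep E I ∧ ∀ J : Set V, IsIndep E J → I ⊆ J → J = I

/-- The ground set of the associated convexity space: the maximal independent sets. -/
abbrev MIS (E : Finset (Finset V)) : Type _ := {σ : Set V // IsMaxIndep E σ}

/-- `S_W`: the maximal independent sets containing `W`. -/
def SW (E : Finset (Finset V)) (W : Set V) : Set (MIS E) :=
  {σ : MIS E | W ⊆ σ.1}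

/-- The associated convexity space of the hypergraph with edge set `E`. -/
def assocC (E : Finset (Finset V)) : Set (Set (MIS E)) :=
  {T | ∃ W : Set V, T = SW E W}

/-- Property `T_k(m)`: among any `m` (not necessarily distinct) edges, some `k` of them
admit a system of distinct representatives which is an edge. -/
def PropT (E : Finset (Finset V)) (k m : ℕ) : Prop :=
  ∀ e : Fin m → Finset V, (∀ i, e i ∈ E) →
    ∃ (g : Fin k → Fin m) (v : Fin k → V), StrictMono g ∧ Function.Injective v ∧
      (∀ j, v j ∈ e (g j)) ∧ Finset.image v Finset.univ ∈ E

/-- The chromatic number of the hypergraph is at most `n`: the vertex set can be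
partitioned into (at most) `n` independent sets. -/
def ChromaticLE (E : Finset (Finset V)) (n : ℕ) : Prop :=
  ∃ P : Fin n → Set V, (∀ v : V, ∃! i, v ∈ P i) ∧
    ∀ i, (P i).Nonempty → IsIndep E (P i)

/-- The clique number is at most `w`: every set of vertices all of whose `k`-element
subsets are edges has size at most `w`. -/
def CliqueNumLE (E : Finset (Finset V)) (k w : ℕ) : Prop :=
  ∀ Q : Finset V, (∀ q ⊆ Q, q.card = k → q ∈ E) → Q.card ≤ w

/-- Property `δ_k(m)`: any sunflower of `m` edges contains `k` edges admitting a system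
of distinct representatives which is an edge. -/
def PropDelta (E : Finset (Finset V)) (k m : ℕ) : Prop :=
  ∀ G : Finset (Finset V), G ⊆ E → G.card = m →
    (∃ S : Finset V, ∀ e ∈ G, ∀ e' ∈ G, e ≠ e' → e ∩ e' = S) →
    ∃ (f : Fin k → Finset V) (v : Fin k → V), Function.Injective f ∧ (∀ j, f j ∈ G) ∧
      Function.Injective v ∧ (∀ j, v j ∈ f j) ∧ Finset.image v Finset.univ ∈ E

end Hypergraphs

/-!
Suppose every family of points `p : ι → X` has a Tverberg partition into parts indexed by `κ`, and
every finite non-intersecting family of convex sets has a non-intersecting subfamily with at most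
`|κ|` members. Use the maps `f : ι → κ` themselves as colors. If no color class were intersecting,
choose members `K_f(j)`, `j ∈ κ`, of each color class `f` without a common point, and for every
`y ∈ ι` let `p y` be a common point of the rainbow selection `f ↦ K_f(f y)`. A Tverberg partition of
`p` is itself one of the colors `f`. Its part `j` consists of points of `K_f(j)`, so its Tverberg
point lies in every `K_f(j)`, a contradiction.
Both inputs follow from the Radon number: Helly's theorem by Levi's argument, and Tverberg
partitions into `2 ^ s` parts by iterating Radon's partition `s` times.
-/

section ConvHull

variable {X : Type*} {C : Set (Set X)} {Y Z K : Set X}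

theorem subset_convHull : Y ⊆ convHull C Y :=
  Set.subset_sInter fun _ hK => hK.2

theorem convHull_subset (hK : K ∈ C) (hY : Y ⊆ K) : convHull C Y ⊆ K :=
  Set.sInter_subset_of_mem ⟨hK, hY⟩

theorem convHull_subset_convHull (hY : Y ⊆ convHull C Z) : convHull C Y ⊆ convHull C Z :=
  Set.subset_sInter fun _ hK => convHull_subset hK.1 (hY.trans (convHull_subset hK.1 hK.2))

theorem convHull_mono (hYZ : Y ⊆ Z) : convHull C Y ⊆ convHull C Z :=
  convHull_subset_convHull (hYZ.trans subset_convHull)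

end ConvHull

section Tverberg

/-- The Tverberg property for families of points indexed by `ι` and partitions with parts indexed
by `κ`: the partition is encoded by the map `f` sending an index to its part. Points may be
repeated, and parts may be empty. -/
def IndexedTverberg {X : Type*} (C : Set (Set X)) (ι κ : Type*) : Prop :=
  ∀ p : ι → X, ∃ f : ι → κ, (⋂ j, convHull C (p '' (f ⁻¹' {j}))).Nonempty

variable {X ι ι' κ κ' : Type*} {C : Set (Set X)} {r : ℕ}

namespace IndexedTverberg

theorem of_unique [Nonempty ι] [Unique κ] : IndexedTverberg C ι κ := by
  intro p
  obtain ⟨i⟩ := ‹Nonempty ι›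
  exact ⟨fun _ => default, p i, Set.mem_iInter.2 fun j =>
    subset_convHull ⟨i, Subsingleton.elim _ _, rfl⟩⟩

theorem congr (eι : ι ≃ ι') (eκ : κ ≃ κ') (h : IndexedTverberg C ι κ) :
    IndexedTverberg C ι' κ' := by
  intro p
  obtain ⟨f, x, hx⟩ := h (p ∘ eι)
  refine ⟨eκ ∘ f ∘ eι.symm, x, Set.mem_iInter.2 fun j => ?_⟩
  refine convHull_mono ?_ (Set.mem_iInter.1 hx (eκ.symm j))
  rintro _ ⟨i, hi, rfl⟩
  exact ⟨eι i, by simpa [Equiv.eq_symm_apply] using hi, rfl⟩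

/-- Partition the Tverberg points of the rows of `ι × ι'`. -/
theorem prod (h : IndexedTverberg C ι κ) (h' : IndexedTverberg C ι' κ') :
    IndexedTverberg C (ι × ι') (κ × κ') := by
  intro p
  choose f z hz using fun i => h' fun i' => p (i, i')
  obtain ⟨g, x, hx⟩ := h z
  refine ⟨fun v => (g v.1, f v.1 v.2), x, Set.mem_iInter.2 fun ⟨j, j'⟩ => ?_⟩
  refine convHull_subset_convHull ?_ (Set.mem_iInter.1 hx j)
  rintro _ ⟨i, hi, rfl⟩
  refine convHull_mono ?_ (Set.mem_iInter.1 (hz i) j')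
  rintro _ ⟨i', hi', rfl⟩
  exact ⟨(i, i'), Prod.ext hi hi', rfl⟩

theorem pow (h : IndexedTverberg C ι κ) (s : ℕ) :
    IndexedTverberg C (Fin s → ι) (Fin s → κ) := by
  induction s with
  | zero => exact of_unique
  | succ s ih => exact (h.prod ih).congr (Fin.consEquiv fun _ => ι) (Fin.consEquiv fun _ => κ)

end IndexedTverberg

theorem RadonLE.indexedTverberg_bool [Fintype ι] (h : RadonLE C r) (hr : r ≤ Fintype.card ι) :
    IndexedTverberg C ι Bool := by
  intro p
  by_cases hp : Function.Injective p
  · obtain ⟨A, B, hAB, hdisj, x, hxA, hxB⟩ :=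
      h (Finset.univ.image p) (by rwa [Finset.card_image_of_injective _ hp, Finset.card_univ])
    have hrange : (A ∪ B : Set X) = Set.range p := by
      rw [hAB, Finset.coe_image, Finset.coe_univ, Set.image_univ]
    refine ⟨fun i => decide (p i ∈ A), x, Set.mem_iInter.2 (Bool.forall_bool.2 ⟨?_, ?_⟩)⟩
    · refine convHull_mono (fun y hy => ?_) hxB
      obtain ⟨i, rfl⟩ := hrange.subset (Or.inr hy)
      exact ⟨i, decide_eq_false (Set.disjoint_right.1 hdisj hy), rfl⟩
    · refine convHull_mono (fun y hy => ?_) hxA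
      obtain ⟨i, rfl⟩ := hrange.subset (Or.inl hy)
      exact ⟨i, decide_eq_true hy, rfl⟩
  · obtain ⟨a, b, hab, hne⟩ := Function.not_injective_iff.1 hp
    refine ⟨fun i => decide (i = a), p a, Set.mem_iInter.2 (Bool.forall_bool.2 ⟨?_, ?_⟩)⟩
    · exact subset_convHull ⟨b, decide_eq_false hne.symm, hab.symm⟩
    · exact subset_convHull ⟨a, decide_eq_true rfl, rfl⟩

end Tverberg

section Helly

variable {X ι κ : Type*} {C : Set (Set X)} {F : Finset (Set X)} {n r : ℕ}

theorem exists_minNonIntersecting_subset (hF : ¬ IsIntersecting F) :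
    ∃ G ⊆ F, MinNonIntersecting G := by
  obtain ⟨G, hGF, hG⟩ :=
    exists_minimal_le_of_wellFoundedLT (fun G : Finset (Set X) => ¬ IsIntersecting G) F hF
  exact ⟨G, hGF, hG.prop, fun K hK => not_not.1 (hG.not_prop_of_lt (Finset.erase_ssubset hK))⟩

theorem HellyLE.exists_indexed_iInter_eq_empty [Nonempty X] [Fintype κ] (h : HellyLE C n)
    (hn : n ≤ Fintype.card κ) (hFC : ↑F ⊆ C) (hF : ¬ IsIntersecting F) :
    ∃ g : κ → Set X, (∀ j, g j ∈ F) ∧ ⋂ j, g j = ∅ := by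
  obtain ⟨G, hGF, hG⟩ := exists_minNonIntersecting_subset hF
  have hGne : Nonempty G := by
    refine (Finset.nonempty_iff_ne_empty.2 ?_).to_subtype
    rintro rfl
    exact hG.1 ⟨Classical.arbitrary X, by simp⟩
  have hcard : Fintype.card G ≤ Fintype.card κ := by
    rw [Fintype.card_coe]
    exact (h G ((Finset.coe_subset.2 hGF).trans hFC) hG).trans hn
  obtain ⟨e⟩ := Function.Embedding.nonempty_of_card_le hcard
  let enum : κ → G := Function.invFun e
  have henum : Function.Surjective enum := Function.invFun_surjective e.injective
  refine ⟨fun j => (enum j).1, fun j => hGF (enum j).2, ?_⟩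
  refine Set.eq_empty_of_forall_notMem fun x hx => hG.1 ⟨x, fun K hK => ?_⟩
  obtain ⟨j, hj⟩ := henum ⟨K, hK⟩
  simpa only [hj] using Set.mem_iInter.1 hx j

/-- Levi's theorem. -/
theorem RadonLE.hellyLE (h : RadonLE C r) : HellyLE C (r - 1) := by
  rintro F hFC ⟨hF, hmin⟩
  refine Nat.le_sub_one_of_lt (lt_of_not_ge fun hr => hF ?_)
  choose p hp using fun K : F => hmin K K.2
  obtain ⟨f, x, hx⟩ := h.indexedTverberg_bool (by rwa [Fintype.card_coe]) p
  refine ⟨x, fun K hK => ?_⟩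
  -- `p L ∈ K` whenever `L ≠ K`, so the part not containing the index `K` lies in `K`.
  refine convHull_subset (hFC hK) ?_ (Set.mem_iInter.1 hx (!f ⟨K, hK⟩))
  rintro _ ⟨L, hL, rfl⟩
  refine hp L K (Finset.mem_erase.2 ⟨?_, hK⟩)
  rintro rfl
  exact (Bool.eq_not_self _).1 hL

theorem HellyLE.colorfulHellyLE_of_indexedTverberg [Nonempty X] [Fintype ι] [Fintype κ]
    (hC : HellyLE C n) (hn : n ≤ Fintype.card κ) (hT : IndexedTverberg C ι κ) :
    ColorfulHellyLE C (Fintype.card κ ^ Fintype.card ι) := by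
  intro F hFC hF
  by_contra! hcon
  choose g hgF hg using fun i => hC.exists_indexed_iInter_eq_empty hn (hFC i) (hcon i)
  let color : Fin (Fintype.card κ ^ Fintype.card ι) ≃ (ι → κ) :=
    (Fintype.equivFinOfCardEq Fintype.card_fun).symm
  choose p hp using fun y => hF (fun i => g i (color i y)) fun i => hgF i _
  obtain ⟨f, x, hx⟩ := hT p
  obtain ⟨i, rfl⟩ := color.surjective f
  refine Set.eq_empty_iff_forall_notMem.1 (hg i) x (Set.mem_iInter.2 fun j => ?_)
  refine convHull_subset (hFC i (hgF i j)) ?_ (Set.mem_iInter.1 hx j)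
  rintro _ ⟨y, rfl, rfl⟩
  exact Set.mem_iInter.1 (hp y) i

theorem radon_implies_colorful_helly_general [Nonempty X] (h : RadonLE C r) :
    ColorfulHellyLE C ((2 ^ Nat.clog 2 r) ^ r ^ Nat.clog 2 r) := by
  have hT : IndexedTverberg C (Fin (Nat.clog 2 r) → Fin r) (Fin (Nat.clog 2 r) → Bool) :=
    (h.indexedTverberg_bool (Fintype.card_fin r).ge).pow _
  have hcard : r - 1 ≤ Fintype.card (Fin (Nat.clog 2 r) → Bool) := by
    simpa using (Nat.sub_le r 1).trans (Nat.le_pow_clog one_lt_two r)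
  simpa using h.hellyLE.colorfulHellyLE_of_indexedTverberg hcard hT

end Helly

/-- (Holmsen–Lee) There is a function `m` such that every convexity space with
Radon number at most `r` has colorful Helly number at most `m r`. -/
theorem radon_implies_colorful_helly :
    ∃ m : ℕ → ℕ, ∀ (X : Type u), Nonempty X → ∀ C : Set (Set X), IsConvexitySpace C →
      ∀ r : ℕ, RadonLE C r → ColorfulHellyLE C (m r) :=
  ⟨fun r => (2 ^ Nat.clog 2 r) ^ r ^ Nat.clog 2 r, fun _ _ _ _ _ h =>
    radon_implies_colorful_helly_general h⟩
end

section
/- Let m ≥ k ≥ 2 be integers and let H = (V, E) be a finite k-uniform hypergraph with at least one edge. Then H has property T_k(m) if and only if the colorful Helly number of the associated convexity space (X, C)_H is at most m. -/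
open scoped Classical

universe u

/-!
A convex set `K` of the associated space is determined by the vertices common to its members, and
a family of convex sets intersects exactly when the union of these vertex sets is independent.
So a family that does not intersect yields an edge, each of whose vertices belongs to all members
of some set of the family, while an edge `e` yields the non-intersecting family
`{S_{v} : v ∈ e}`. Under this dictionary, choosing one set from each of `m` families amounts to
choosing one vertex from each of `m` edges. Both sides of the equivalence thus say that any `m`
edges have a transversal that contains an edge.
-/

section IndependentSets

variable {V : Type*} {E : Finset (Finset V)}

theorem not_isIndep_iff {I : Set V} : ¬ IsIndep E I ↔ ∃ e ∈ E, (e : Set V) ⊆ I := by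
  simp only [IsIndep, not_forall, not_not, exists_prop]

theorem IsIndep.sUnion_of_isChain {c : Set (Set V)} (hc : ∀ I ∈ c, IsIndep E I)
    (hchain : IsChain (· ⊆ ·) c) (hne : c.Nonempty) : IsIndep E (⋃₀ c) := fun e he hec =>
  have ⟨I, hI, heI⟩ :=
    hchain.directedOn.exists_mem_subset_of_finite_of_subset_sUnion hne e.finite_toSet hec
  hc I hI e he heI

theorem IsIndep.exists_subset_mis {W : Set V} (hW : IsIndep E W) : ∃ σ : MIS E, W ⊆ σ.1 := by
  obtain ⟨M, hWM, hM⟩ := zorn_subset_nonempty {I | IsIndep E I}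
    (fun c hc hchain hne =>
      ⟨⋃₀ c, IsIndep.sUnion_of_isChain hc hchain hne, fun _ => Set.subset_sUnion_of_mem⟩) W hW
  exact ⟨⟨M, hM.prop, fun J hJ hMJ => (hM.eq_of_subset hJ hMJ).symm⟩, hWM⟩

theorem SW_nonempty_iff {W : Set V} : (SW E W).Nonempty ↔ IsIndep E W :=
  ⟨fun ⟨σ, hWσ⟩ e he heW => σ.2.1 e he (heW.trans hWσ), IsIndep.exists_subset_mis⟩

end IndependentSets

section AssociatedConvexity

variable {V : Type*} {E : Finset (Finset V)}

theorem mem_SW_singleton {v : V} {σ : MIS E} : σ ∈ SW E {v} ↔ v ∈ σ.1 :=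
  Set.singleton_subset_iff

theorem iInter_SW_singleton {ι : Sort*} (w : ι → V) :
    ⋂ i, SW E {w i} = SW E (Set.range w) := by
  ext σ
  rw [Set.mem_iInter]
  exact (forall_congr' fun _ => mem_SW_singleton).trans Set.range_subset_iff.symm

theorem isIntersecting_image_SW_singleton_iff {W : Finset V} :
    IsIntersecting (W.image fun v => SW E {v}) ↔ IsIndep E (W : Set V) := by
  rw [← SW_nonempty_iff]
  refine exists_congr fun σ => Finset.forall_mem_image.trans ?_
  exact forall₂_congr fun _ _ => mem_SW_singleton

/-- The vertices lying in every member of a set `K` of maximal independent sets: the largest `W`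
with `K ⊆ S_W`. -/
def commonVertices (K : Set (MIS E)) : Set V :=
  {v | ∀ σ ∈ K, v ∈ σ.1}

theorem commonVertices_subset_iff_mem {K : Set (MIS E)} (hK : K ∈ assocC E) {σ : MIS E} :
    commonVertices K ⊆ σ.1 ↔ σ ∈ K := by
  obtain ⟨W, rfl⟩ := hK
  exact ⟨fun h w hw => h fun _ hτ => hτ hw, fun hσ _ hv => hv σ hσ⟩

theorem isIntersecting_iff_isIndep_commonVertices {F : Finset (Set (MIS E))}
    (hF : ↑F ⊆ assocC E) :
    IsIntersecting F ↔ IsIndep E (⋃ K ∈ F, commonVertices K) := by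
  rw [← SW_nonempty_iff]
  refine exists_congr fun σ => Iff.trans ?_ Set.iUnion₂_subset_iff.symm
  exact forall₂_congr fun K hK => (commonVertices_subset_iff_mem (hF hK)).symm

end AssociatedConvexity

section DependentTransversals

variable {V : Type*} {E : Finset (Finset V)} {k m : ℕ}

/-- Any `m` edges, repetitions allowed, have a transversal that contains an edge. A transversal
picks one vertex from each of the `m` edges and need not be injective. -/
def HasDependentTransversals (E : Finset (Finset V)) (m : ℕ) : Prop :=
  ∀ e : Fin m → Finset V, (∀ i, e i ∈ E) →
    ∃ w : Fin m → V, (∀ i, w i ∈ e i) ∧ ¬ IsIndep E (Set.range w)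

theorem HasDependentTransversals.colorfulHellyLE (hE : HasDependentTransversals E m) :
    ColorfulHellyLE (assocC E) m := by
  intro F hF hmeet
  by_contra! hnot
  have hedge (i : Fin m) : ∃ e ∈ E, (e : Set V) ⊆ ⋃ K ∈ F i, commonVertices K :=
    not_isIndep_iff.mp (mt (isIntersecting_iff_isIndep_commonVertices (hF i)).mpr (hnot i))
  choose e heE heF using hedge
  obtain ⟨w, hwe, hdep⟩ := hE e heE
  have hset (i : Fin m) : ∃ K ∈ F i, w i ∈ commonVertices K := by
    simpa only [Set.mem_iUnion, exists_prop] using heF i (hwe i)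
  choose K hKF hwK using hset
  obtain ⟨σ, hσ⟩ := hmeet K hKF
  exact hdep (SW_nonempty_iff.mp
    ⟨σ, Set.range_subset_iff.mpr fun i => hwK i σ (Set.mem_iInter.mp hσ i)⟩)

theorem ColorfulHellyLE.hasDependentTransversals (hE : ColorfulHellyLE (assocC E) m) :
    HasDependentTransversals E m := by
  intro e heE
  by_contra! hindep
  obtain ⟨i, hi⟩ := hE (fun i => (e i).image fun v => SW E {v})
    (fun i => by
      rw [Finset.coe_image, Set.image_subset_iff]
      exact fun v _ => ⟨{v}, rfl⟩)
    (fun K hK => by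
      choose w hwe hwK using fun i => Finset.mem_image.mp (hK i)
      simp only [← hwK, iInter_SW_singleton]
      exact SW_nonempty_iff.mpr (hindep w hwe))
  exact isIntersecting_image_SW_singleton_iff.mp hi (e i) (heE i) subset_rfl

theorem hasDependentTransversals_iff_colorfulHellyLE :
    HasDependentTransversals E m ↔ ColorfulHellyLE (assocC E) m :=
  ⟨HasDependentTransversals.colorfulHellyLE, ColorfulHellyLE.hasDependentTransversals⟩

variable [DecidableEq V]

theorem exists_strictMono_image_comp_eq {ι : Type*} [LinearOrder ι] {w : ι → V} {f : Finset V}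
    (hf : (f : Set V) ⊆ Set.range w) :
    ∃ g : Fin f.card → ι, StrictMono g ∧ Function.Injective (w ∘ g) ∧
      Finset.univ.image (w ∘ g) = f := by
  have hsurj : Set.SurjOn w Set.univ f := by rwa [Set.SurjOn, Set.image_univ]
  obtain ⟨s, -, hinj, himage⟩ := Finset.exists_subset_injOn_image_eq_of_surjOn Set.univ f hsurj
  have hcard : s.card = f.card := by rw [← himage, Finset.card_image_of_injOn hinj]
  refine ⟨s.orderEmbOfFin hcard, (s.orderEmbOfFin hcard).strictMono, fun a b hab => ?_, ?_⟩
  · exact (s.orderEmbOfFin hcard).injective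
      (hinj (s.orderEmbOfFin_mem hcard a) (s.orderEmbOfFin_mem hcard b) hab)
  · rw [← Finset.image_image, Finset.image_orderEmbOfFin_univ, himage]

theorem PropT.hasDependentTransversals (hE : PropT E k m) (hempty : ∅ ∉ E) :
    HasDependentTransversals E m := by
  intro e heE
  obtain ⟨g, v, hg, -, hve, hvE⟩ := hE e heE
  have hne (i : Fin m) : (e i).Nonempty :=
    Finset.nonempty_iff_ne_empty.mpr (ne_of_mem_of_not_mem (heE i) hempty)
  choose u hu using hne
  refine ⟨Function.extend g v u, fun i => ?_, fun hindep => hindep _ hvE ?_⟩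
  · by_cases hi : ∃ j, g j = i
    · obtain ⟨j, rfl⟩ := hi
      rw [hg.injective.extend_apply]
      exact hve j
    · rw [Function.extend_apply' v u i hi]
      exact hu i
  · rw [Finset.coe_image, Finset.coe_univ, Set.image_univ, Set.range_subset_iff]
    exact fun j => ⟨g j, hg.injective.extend_apply v u j⟩

theorem HasDependentTransversals.propT (hE : HasDependentTransversals E m)
    (hunif : ∀ e ∈ E, e.card = k) : PropT E k m := by
  intro e heE
  obtain ⟨w, hwe, hdep⟩ := hE e heE
  obtain ⟨f, hfE, hfw⟩ := not_isIndep_iff.mp hdep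
  obtain rfl := hunif f hfE
  obtain ⟨g, hg, hinj, himage⟩ := exists_strictMono_image_comp_eq hfw
  exact ⟨g, w ∘ g, hg, hinj, fun j => hwe (g j), himage.symm ▸ hfE⟩

end DependentTransversals

theorem propT_iff_colorful_helly_general {V : Type u} [DecidableEq V] (m k : ℕ)
    (E : Finset (Finset V)) (hunif : ∀ e ∈ E, e.card = k) (hempty : ∅ ∉ E) :
    PropT E k m ↔ ColorfulHellyLE (assocC E) m :=
  Iff.trans ⟨fun hT => hT.hasDependentTransversals hempty, fun hE => hE.propT hunif⟩
    hasDependentTransversals_iff_colorfulHellyLE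

/-- A `k`-uniform hypergraph has property `T_k(m)` if and only if the colorful
Helly number of its associated convexity space is at most `m`. -/
theorem propT_iff_colorful_helly {V : Type u} [Fintype V] [DecidableEq V] (m k : ℕ)
    (hk : 2 ≤ k) (hkm : k ≤ m) (E : Finset (Finset V))
    (hunif : ∀ e ∈ E, e.card = k) (hne : E.Nonempty) :
    PropT E k m ↔ ColorfulHellyLE (assocC E) m :=
  propT_iff_colorful_helly_general m k E hunif fun hE =>
    absurd (hunif ∅ hE) (by rw [Finset.card_empty]; omega)
end
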